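/- Let (w₀, w₁, w₂) be a triple of quantum shape parameters. Then the operator ℒ = Ψ_w(−A₀A₁ ⊗ A₁^{−1}) ∘ Υ satisfies ℒ ∘ (A₂ ⊗ I) = (I⊗I − q²w₂^{−1}(A₂ ⊗ A₁)) ∘ (I ⊗ w₁^{−1}A₀) ∘ ℒ in End(ℂ^N ⊗ ℂ^N), where I = id_{ℂ^N}. -/

import Mathlib

open Finset Kronecker

/-- `A₀ e_k = q^{2k} e_k` on `ℂ^N` (basis indexed by `ZMod N`). -/
noncomputable def A0 (N : ℕ) (q : ℂ) : Matrix (ZMod N) (ZMod N) ℂ :=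
  Matrix.diagonal fun k => q ^ (2 * k.val)

/-- `A₁ e_k = e_{k+1}`. -/
noncomputable def A1 (N : ℕ) : Matrix (ZMod N) (ZMod N) ℂ :=
  fun j k => if j = k + 1 then 1 else 0

/-- `A₂ e_k = q^{1−2k} e_{k−1}`. -/
noncomputable def A2 (N : ℕ) (q : ℂ) : Matrix (ZMod N) (ZMod N) ℂ :=
  fun j k => if j = k - 1 then q ^ ((1 : ℤ) - 2 * (k.val : ℤ)) else 0

/-- The operator `Ψ_w(U)` (with the scalar normalization `h(w₀)` omitted). -/
noncomputable def Psi (N : ℕ) (q w₀ w₂ : ℂ) {A : Type*} [Ring A] [Algebra ℂ A] (U : A) : A :=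
  ∑ i ∈ Finset.range N,
    (∏ j ∈ Finset.range i, (-q⁻¹ * w₂) / (1 - w₀⁻¹ * q ^ (2 * (j + 1)))) • U ^ i

/-- `Υ := (1/N) Σ_{i,j=0}^{N−1} q^{−2ij−j} A₀^i ⊗ (A₁A₀)^{−j}` on `ℂ^N ⊗ ℂ^N`. -/
noncomputable def Ups (N : ℕ) [NeZero N] (q : ℂ) :
    Matrix (ZMod N × ZMod N) (ZMod N × ZMod N) ℂ :=
  (N : ℂ)⁻¹ • ∑ i ∈ Finset.range N, ∑ j ∈ Finset.range N,
    (q ^ (-(2 * (i : ℤ) * (j : ℤ) + (j : ℤ)))) • ((A0 N q ^ i) ⊗ₖ ((A1 N * A0 N q)⁻¹ ^ j))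

/-- `ℒ := Ψ_w(−A₀A₁ ⊗ A₁⁻¹) ∘ Υ`, the transposed basic matrix dilogarithm (up to the
scalar normalization `h(w₀)`). -/
noncomputable def Ldil (N : ℕ) [NeZero N] (q w₀ w₂ : ℂ) :
    Matrix (ZMod N × ZMod N) (ZMod N × ZMod N) ℂ :=
  Psi N q w₀ w₂ (-((A0 N q * A1 N) ⊗ₖ (A1 N)⁻¹)) * Ups N q


lemma q_val_succ (N : ℕ) [NeZero N] (q : ℂ) (hq : q ^ N = 1) (k : ZMod N) :
    q ^ ((k + 1).val) = q ^ k.val * q := by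
  have h : (k + 1).val = (k.val + 1) % N := by
    conv_lhs => rw [← ZMod.natCast_zmod_val k]
    rw [← Nat.cast_succ, ZMod.val_natCast]
  rw [h, ← pow_succ]
  exact (pow_eq_pow_mod _ hq).symm

lemma A0_mul_A1 (N : ℕ) [NeZero N] (q : ℂ) (hq : q ^ N = 1) :
    A0 N q * A1 N = q ^ 2 • (A1 N * A0 N q) := by
  ext i j
  simp only [A0, Matrix.diagonal_mul, Matrix.mul_diagonal, Matrix.smul_apply, A1, smul_eq_mul]
  split_ifs with h
  · subst h
    rw [mul_comm 2, pow_mul, q_val_succ N q hq]; ring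
  · simp

lemma A0_pow (N : ℕ) [NeZero N] (q : ℂ) (hq : q ^ N = 1) : A0 N q ^ N = 1 := by
  rw [A0, Matrix.diagonal_pow, ← Matrix.diagonal_one]
  congr 1
  ext k
  rw [Pi.pow_apply, ← pow_mul, mul_comm, pow_mul, hq, one_pow]

lemma A1_pow_apply (N : ℕ) [NeZero N] (n : ℕ) (i j : ZMod N) :
    (A1 N ^ n) i j = if i = j + n then 1 else 0 := by
  induction n generalizing i j with
  | zero => simp [Matrix.one_apply]
  | succ n ih =>
    rw [pow_succ, Matrix.mul_apply]
    simp only [ih, A1]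
    simp [add_left_comm, add_comm]

lemma A1_pow (N : ℕ) [NeZero N] : A1 N ^ N = 1 := by
  ext i j
  rw [A1_pow_apply]
  simp [Matrix.one_apply]

lemma A2_mul (N : ℕ) [NeZero N] (q : ℂ) (hq : q ^ N = 1) :
    A2 N q * (A0 N q * A1 N) = q • 1 := by
  have hq0 : q ≠ 0 := by
    rintro rfl
    simp [NeZero.ne N] at hq
  ext i j
  rw [← Matrix.mul_assoc]
  simp only [A0, A1, Matrix.mul_apply (M := A2 N q * _), Matrix.mul_diagonal, A2]
  simp only [mul_ite, mul_one, mul_zero, Finset.sum_ite_eq', Finset.mem_univ, if_true,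
    add_sub_cancel_right, Matrix.smul_apply, Matrix.one_apply, smul_eq_mul, ite_mul, zero_mul]
  rcases eq_or_ne i j with h | h
  · simp only [h, if_true]
    rw [← zpow_natCast, ← zpow_add₀ hq0]
    push_cast
    simp
  · simp [h]

lemma mul_pow_weyl {M : Type*} [Ring M] [Algebra ℂ M] (c : ℂ) (x y : M)
    (h : y * x = c • (x * y)) (n : ℕ) : (x * y) ^ n = c ^ (∑ i ∈ Finset.range n, i) • (x ^ n * y ^ n) := by
  have h1 : ∀ n : ℕ, y ^ n * x = c ^ n • (x * y ^ n) := by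
    intro n
    induction n with
    | zero => simp
    | succ n ih =>
      rw [pow_succ', mul_assoc, ih, mul_smul_comm, ← mul_assoc, h, smul_mul_assoc, smul_smul,
        mul_assoc, pow_succ]
  induction n with
  | zero => simp
  | succ n ih =>
    rw [pow_succ, ih, Finset.sum_range_succ, smul_mul_assoc, mul_assoc, ← mul_assoc (y ^ n), h1,
      smul_mul_assoc, mul_smul_comm, smul_smul, pow_add]
    simp only [mul_assoc, pow_succ]

lemma A1A0_pow (N : ℕ) [NeZero N] (q : ℂ) (hq : q ^ N = 1) : (A1 N * A0 N q) ^ N = 1 := by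
  rw [mul_pow_weyl (q ^ 2) _ _ (A0_mul_A1 N q hq), A1_pow, A0_pow N q hq, ← pow_mul, mul_comm 2,
    Finset.sum_range_id_mul_two, pow_mul, hq]
  simp

lemma A0A1_pow (N : ℕ) [NeZero N] (q : ℂ) (hq : q ^ N = 1) : (A0 N q * A1 N) ^ N = 1 := by
  rw [A0_mul_A1 N q hq, smul_pow, A1A0_pow N q hq, ← pow_mul, mul_comm, pow_mul, hq]
  simp

lemma prod_one_sub (N : ℕ) (hN : 0 < N) (r z : ℂ) (hr : IsPrimitiveRoot r N) :
    ∏ j ∈ Finset.range N, (1 - z * r ^ (j + 1)) = 1 - z ^ N := by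
  have h1 : ∏ j ∈ Finset.range N, (1 - z * r ^ (j + 1)) = ∏ j ∈ Finset.range N, (1 - z * r ^ j) := by
    have := Finset.prod_range_succ (fun j => 1 - z * r ^ j) N
    rw [Finset.prod_range_succ'] at this
    simp only [hr.pow_eq_one, pow_zero, mul_one] at this
    by_cases hz : z = 1
    · subst hz
      rw [Finset.prod_eq_zero (i := N - 1) (by simp; omega), Finset.prod_eq_zero (i := 0) (by simp; omega)]
      · simp
      · rw [Nat.sub_add_cancel hN, hr.pow_eq_one]; simp
    · exact mul_right_cancel₀ (sub_ne_zero.2 (Ne.symm hz)) this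
  have h2 := hr.pow_sub_pow_eq_prod_sub_mul 1 z hN
  rw [h1]
  rw [one_pow] at h2
  rw [h2]
  symm
  have h3 : Polynomial.nthRootsFinset N (1 : ℂ) = (Finset.range N).image (fun j => r ^ j) := by
    symm
    apply Finset.eq_of_subset_of_card_le
    · intro x hx
      obtain ⟨j, -, rfl⟩ := Finset.mem_image.1 hx
      rw [Polynomial.mem_nthRootsFinset hN, ← pow_mul, mul_comm, pow_mul, hr.pow_eq_one, one_pow]
    · rw [hr.card_nthRootsFinset, Finset.card_image_of_injOn (by simpa using hr.injOn_pow)]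
      simp
  rw [h3, Finset.prod_image (by simpa using hr.injOn_pow)]
  simp [mul_comm]

lemma sum_shift {M : Type*} [AddCommGroup M] (f : ℕ → M) (N : ℕ) (h : f N = f 0) :
    ∑ i ∈ Finset.range N, f (i + 1) = ∑ i ∈ Finset.range N, f i := by
  have := Finset.sum_range_succ f N
  rw [Finset.sum_range_succ', h] at this
  exact add_right_cancel this

lemma Psi_rec (N : ℕ) (hNodd : Odd N) (q : ℂ) (hq : IsPrimitiveRoot q N)
    (w₀ w₂ : ℂ) (hw₀ : w₀ ≠ 0) (hw₂ : w₂ ≠ 0) (hshape : w₂ ^ N = 1 - (w₀⁻¹) ^ N)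
    {M : Type*} [Ring M] [Algebra ℂ M] (U : M) (hU : U ^ N = -1) :
    Psi N q w₀ w₂ U = (w₀ • (1 : M) + (w₀ * w₂ * (q⁻¹) ^ 3) • U) * Psi N q w₀ w₂ ((q⁻¹ ^ 2) • U) := by
  have hNpos : 0 < N := hNodd.pos
  have hq0 : q ≠ 0 := hq.ne_zero hNpos.ne'
  have hr : IsPrimitiveRoot (q ^ 2) N :=
    hq.pow_of_coprime 2 (Nat.coprime_two_left.2 hNodd)
  have hprod := prod_one_sub N hNpos (q ^ 2) w₀⁻¹ hr
  rw [← hshape] at hprod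
  have hne : ∀ j : ℕ, 1 - w₀⁻¹ * q ^ (2 * (j + 1)) ≠ 0 := by
    intro j h0
    have h1 : w₀⁻¹ * q ^ (2 * (j + 1)) = 1 := (sub_eq_zero.1 h0).symm
    have h2 : (w₀⁻¹ * q ^ (2 * (j + 1))) ^ N = 1 := by rw [h1, one_pow]
    rw [mul_pow, ← pow_mul, mul_comm _ N, pow_mul, hq.pow_eq_one, one_pow, mul_one] at h2
    rw [h2, sub_self] at hshape
    exact pow_ne_zero N hw₂ hshape
  unfold Psi
  set a : ℕ → ℂ := fun i => ∏ j ∈ Finset.range i, (-q⁻¹ * w₂) / (1 - w₀⁻¹ * q ^ (2 * (j + 1))) with ha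
  have ha0 : a 0 = 1 := by simp [ha]
  have haN : a N = -1 := by
    simp only [ha, Finset.prod_div_distrib, Finset.prod_const, Finset.card_range]
    simp only [pow_mul, hprod]
    rw [mul_pow, hNodd.neg_pow, inv_pow, hq.pow_eq_one]
    have := pow_ne_zero N hw₂
    field_simp
  have hasucc : ∀ i, a (i + 1) * (1 - w₀⁻¹ * q ^ (2 * (i + 1))) = a i * (-q⁻¹ * w₂) := by
    intro i
    simp only [ha, Finset.prod_range_succ]
    have := hne i
    rw [mul_assoc, div_mul_cancel₀ _ this]
  have key := sum_shift (fun i => (a i * (1 - w₀ * (q⁻¹ ^ 2) ^ i)) • U ^ i) N (by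
    simp only [haN, ha0, hU, pow_zero, ← pow_mul, mul_comm 2 N]
    rw [pow_mul, inv_pow, hq.pow_eq_one]
    simp [← neg_smul])
  have hs : ∀ i, a (i + 1) * (1 - w₀ * (q⁻¹ ^ 2) ^ (i + 1))
      = w₀ * w₂ * (q⁻¹) ^ 3 * (a i * (q⁻¹ ^ 2) ^ i) := by
    intro i
    have h1 : (1 - w₀ * (q⁻¹ ^ 2) ^ (i + 1)) =
      (1 - w₀⁻¹ * q ^ (2 * (i + 1))) * (-(w₀ * (q⁻¹ ^ 2) ^ (i + 1))) := by
      rw [← pow_mul, inv_pow]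
      have := pow_ne_zero (2 * (i + 1)) hq0
      field_simp
      ring
    rw [h1, ← mul_assoc, hasucc]
    ring
  simp only [hs] at key
  simp only [smul_pow, smul_smul, add_mul, Finset.mul_sum, smul_mul_assoc, mul_smul_comm, one_mul,
    ← pow_succ']
  change ∑ i ∈ Finset.range N, a i • U ^ i = ∑ x ∈ Finset.range N,
    (a x * (q⁻¹ ^ 2) ^ x) • (w₀ • U ^ x + (w₀ * w₂ * q⁻¹ ^ 3) • U ^ (x + 1))
  have hsplit : ∑ x ∈ Finset.range N,
      (a x * (q⁻¹ ^ 2) ^ x) • (w₀ • U ^ x + (w₀ * w₂ * q⁻¹ ^ 3) • U ^ (x + 1)) =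
      ∑ x ∈ Finset.range N, (w₀ * (a x * (q⁻¹ ^ 2) ^ x)) • U ^ x +
      ∑ x ∈ Finset.range N, (w₀ * w₂ * q⁻¹ ^ 3 * (a x * (q⁻¹ ^ 2) ^ x)) • U ^ (x + 1) := by
    rw [← Finset.sum_add_distrib]
    refine Finset.sum_congr rfl fun i _ => ?_
    rw [smul_add, smul_smul, smul_smul, mul_comm _ w₀, mul_comm _ (w₀ * w₂ * q⁻¹ ^ 3)]
  rw [hsplit, key, ← Finset.sum_add_distrib]
  refine Finset.sum_congr rfl fun i _ => ?_
  rw [← add_smul]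
  congr 1
  ring

lemma A2_mul_A0 (N : ℕ) [NeZero N] (q : ℂ) (hq : q ^ N = 1) :
    A2 N q * A0 N q = q ^ 2 • (A0 N q * A2 N q) := by
  ext i j
  simp only [A0, Matrix.diagonal_mul, Matrix.mul_diagonal, Matrix.smul_apply, A2, smul_eq_mul]
  split_ifs with h
  · obtain rfl : j = i + 1 := by simp [h]
    have h2 : q ^ (2 * (i + 1).val) = q ^ 2 * q ^ (2 * i.val) := by
      rw [mul_comm 2, pow_mul, q_val_succ N q hq]; ring
    rw [h2]; ring
  · simp

lemma A2_mul_A0_pow (N : ℕ) [NeZero N] (q : ℂ) (hq : q ^ N = 1) (i : ℕ) :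
    A0 N q ^ i * A2 N q = (q⁻¹ ^ 2) ^ i • (A2 N q * A0 N q ^ i) := by
  have hq0 : q ≠ 0 := by
    rintro rfl
    simp [NeZero.ne N] at hq
  have h1 : A0 N q * A2 N q = q⁻¹ ^ 2 • (A2 N q * A0 N q) := by
    rw [A2_mul_A0 N q hq, smul_smul, inv_pow, inv_mul_cancel₀ (pow_ne_zero 2 hq0), one_smul]
  induction i with
  | zero => simp
  | succ i ih =>
    rw [pow_succ, Matrix.mul_assoc, h1, Matrix.mul_smul, ← Matrix.mul_assoc, ih, Matrix.smul_mul,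
      smul_smul, Matrix.mul_assoc, ← pow_succ, ← pow_succ']

lemma isUnit_det_of_pow {n : Type*} [Fintype n] [DecidableEq n] (M : Matrix n n ℂ) (k : ℕ)
    (hk : k ≠ 0) (h : M ^ k = 1) : IsUnit M.det :=
  (Matrix.isUnit_iff_isUnit_det M).1 (IsUnit.of_pow_eq_one h hk)

lemma Ups_mul (N : ℕ) [NeZero N] (q : ℂ) (hq : q ^ N = 1) :
    Ups N q * (A2 N q ⊗ₖ (1 : Matrix (ZMod N) (ZMod N) ℂ)) =
      q • ((A2 N q ⊗ₖ (A1 N * A0 N q)) * Ups N q) := by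
  have hq0 : q ≠ 0 := by
    rintro rfl
    simp [NeZero.ne N] at hq
  have hV := A1A0_pow N q hq
  have hdet := isUnit_det_of_pow _ N (NeZero.ne N) hV
  have hVB := Matrix.mul_nonsing_inv _ hdet
  have hBN : ((A1 N * A0 N q)⁻¹) ^ N = 1 := by rw [Matrix.inv_pow', hV, inv_one]
  unfold Ups
  generalize (A1 N * A0 N q)⁻¹ = B at *
  generalize A1 N * A0 N q = V at *
  rw [Matrix.smul_mul, Matrix.mul_smul, smul_comm q]
  congr 1
  simp only [Finset.sum_mul, Finset.mul_sum, Finset.smul_sum]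
  refine Finset.sum_congr rfl fun i _ => ?_
  have key := sum_shift (fun j : ℕ => q • ((A2 N q ⊗ₖ V) *
    ((q ^ (-(2 * (i : ℤ) * (j : ℤ) + (j : ℤ)))) • ((A0 N q ^ i) ⊗ₖ (B ^ j))))) N (by
      have : q ^ (-(2 * (i : ℤ) * (N : ℤ) + (N : ℤ))) = 1 := by
        rw [show (-(2 * (i : ℤ) * (N : ℤ) + (N : ℤ))) = (N : ℤ) * (-(2 * i + 1)) by ring, zpow_mul,
          zpow_natCast, hq, one_zpow]
      simp only [this, hBN]
      simp)
  rw [← key]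
  refine Finset.sum_congr rfl fun j _ => ?_
  rw [Matrix.smul_mul, ← Matrix.mul_kronecker_mul, A2_mul_A0_pow N q hq, Matrix.mul_smul,
    ← Matrix.mul_kronecker_mul, pow_succ' B, ← Matrix.mul_assoc V, hVB, Matrix.one_mul,
    Matrix.mul_one, Matrix.smul_kronecker, smul_smul, smul_smul]
  congr 1
  have h1 : (q⁻¹ ^ 2) ^ i = q ^ (-(2 * (i : ℤ))) := by
    rw [← pow_mul, inv_pow, zpow_neg, ← zpow_natCast]
    push_cast
    rfl
  rw [h1, ← zpow_add₀ hq0, ← zpow_one_add₀ hq0]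
  congr 1
  push_cast
  ring

lemma semi_Psi (N : ℕ) (q w₀ w₂ : ℂ) {M : Type*} [Ring M] [Algebra ℂ M] (c : ℂ) (U K : M)
    (h : K * U = (c • U) * K) : K * Psi N q w₀ w₂ U = Psi N q w₀ w₂ (c • U) * K := by
  unfold Psi
  rw [Finset.mul_sum, Finset.sum_mul]
  refine Finset.sum_congr rfl fun i _ => ?_
  have : SemiconjBy K U (c • U) := h
  rw [mul_smul_comm, smul_mul_assoc, (this.pow_right i).eq]

/-- The intertwining relation for the generator `X₄`:
`ℒ ∘ (A₂ ⊗ I) = (I⊗I − q²w₂⁻¹(A₂ ⊗ A₁)) ∘ (I ⊗ w₁⁻¹A₀) ∘ ℒ` for a triple of quantum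
shape parameters `(w₀, w₁, w₂)`. -/
theorem Ldil_X4_relation (N : ℕ) [NeZero N] (hN : 3 ≤ N) (hNodd : Odd N)
    (q : ℂ) (hq : IsPrimitiveRoot q N)
    (w₀ w₁ w₂ : ℂ) (hw₀ : w₀ ≠ 0) (hw₁ : w₁ ≠ 0) (hw₂ : w₂ ≠ 0)
    (htetra : w₀ * w₁ * w₂ = -q) (hshape : w₂ ^ N = 1 - (w₀⁻¹) ^ N) :
    Ldil N q w₀ w₂ * (A2 N q ⊗ₖ (1 : Matrix (ZMod N) (ZMod N) ℂ)) =
      (1 - (q ^ 2 * w₂⁻¹) • (A2 N q ⊗ₖ A1 N)) *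
        (w₁⁻¹ • ((1 : Matrix (ZMod N) (ZMod N) ℂ) ⊗ₖ A0 N q)) * Ldil N q w₀ w₂ := by
  have hqN := hq.pow_eq_one
  have hNpos : 0 < N := hNodd.pos
  have hq0 : q ≠ 0 := hq.ne_zero hNpos.ne'
  have hA1det := isUnit_det_of_pow _ N hNpos.ne' (A1_pow N)
  have hA1i := Matrix.nonsing_inv_mul _ hA1det
  have hA1i' := Matrix.mul_nonsing_inv _ hA1det
  have hA1N : ((A1 N)⁻¹) ^ N = 1 := by rw [Matrix.inv_pow', A1_pow, inv_one]
  have hA2 := A2_mul N q hqN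
  have hA2' : (A0 N q * A1 N) * A2 N q = q • 1 := by
    have h1 : (q⁻¹ • A2 N q) * (A0 N q * A1 N) = 1 := by
      rw [Matrix.smul_mul, hA2, smul_smul, inv_mul_cancel₀ hq0, one_smul]
    have h2 := mul_eq_one_comm.1 h1
    rw [Matrix.mul_smul] at h2
    rw [← h2, smul_smul, mul_inv_cancel₀ hq0, one_smul]
  have hA0A1i : A0 N q * (A1 N)⁻¹ = q⁻¹ ^ 2 • ((A1 N)⁻¹ * A0 N q) := by
    have h1 : (A1 N)⁻¹ * (A0 N q * A1 N) * (A1 N)⁻¹ = q ^ 2 • (A0 N q * (A1 N)⁻¹) := by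
      rw [A0_mul_A1 N q hqN, Matrix.mul_smul, ← Matrix.mul_assoc, hA1i, Matrix.one_mul,
        Matrix.smul_mul]
    rw [Matrix.mul_assoc, Matrix.mul_assoc, hA1i', Matrix.mul_one] at h1
    rw [h1, smul_smul, inv_pow, inv_mul_cancel₀ (pow_ne_zero 2 hq0), one_smul]
  have hUN : (-((A0 N q * A1 N) ⊗ₖ (A1 N)⁻¹)) ^ N = -1 := by
    have hk : ∀ n : ℕ, ((A0 N q * A1 N) ⊗ₖ (A1 N)⁻¹) ^ n = ((A0 N q * A1 N) ^ n) ⊗ₖ ((A1 N)⁻¹ ^ n) := by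
      intro n
      induction n with
      | zero => simp
      | succ n ih => rw [pow_succ, ih, ← Matrix.mul_kronecker_mul, ← pow_succ, ← pow_succ]
    rw [hNodd.neg_pow, hk, A0A1_pow N q hqN, hA1N, Matrix.one_kronecker_one]
  have hrec := Psi_rec N hNodd q hq w₀ w₂ hw₀ hw₂ hshape _ hUN
  have hUY : (A2 N q ⊗ₖ A1 N) * (-((A0 N q * A1 N) ⊗ₖ (A1 N)⁻¹)) = (-q) • 1 := by
    rw [mul_neg, ← Matrix.mul_kronecker_mul, hA2, hA1i', Matrix.smul_kronecker,
      Matrix.one_kronecker_one, neg_smul]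
  have hUY' : (-((A0 N q * A1 N) ⊗ₖ (A1 N)⁻¹)) * (A2 N q ⊗ₖ A1 N) = (-q) • 1 := by
    rw [neg_mul, ← Matrix.mul_kronecker_mul, hA2', hA1i, Matrix.smul_kronecker,
      Matrix.one_kronecker_one, neg_smul]
  have hKU : ((1 : Matrix (ZMod N) (ZMod N) ℂ) ⊗ₖ A0 N q) * (-((A0 N q * A1 N) ⊗ₖ (A1 N)⁻¹)) =
      (q⁻¹ ^ 2 • (-((A0 N q * A1 N) ⊗ₖ (A1 N)⁻¹))) * ((1 : Matrix (ZMod N) (ZMod N) ℂ) ⊗ₖ A0 N q) := by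
    rw [mul_neg, smul_neg, neg_mul, Matrix.smul_mul, ← Matrix.mul_kronecker_mul,
      ← Matrix.mul_kronecker_mul, hA0A1i, Matrix.kronecker_smul, Matrix.one_mul, Matrix.mul_one]
  have hYK : A2 N q ⊗ₖ (A1 N * A0 N q) =
      (A2 N q ⊗ₖ A1 N) * ((1 : Matrix (ZMod N) (ZMod N) ℂ) ⊗ₖ A0 N q) := by
    rw [← Matrix.mul_kronecker_mul, Matrix.mul_one]
  have hups := Ups_mul N q hqN
  have hsemi := semi_Psi N q w₀ w₂ (q⁻¹ ^ 2) _ _ hKU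
  have hYsemi := semi_Psi N q w₀ w₂ 1 (-((A0 N q * A1 N) ⊗ₖ (A1 N)⁻¹)) (A2 N q ⊗ₖ A1 N)
    (by rw [one_smul, hUY, hUY'])
  rw [one_smul] at hYsemi
  unfold Ldil
  rw [Matrix.mul_assoc, hups, hYK]
  generalize -((A0 N q * A1 N) ⊗ₖ (A1 N)⁻¹) = U at *
  generalize A2 N q ⊗ₖ A1 N = Y at *
  generalize (1 : Matrix (ZMod N) (ZMod N) ℂ) ⊗ₖ A0 N q = K at *
  have hscal : q • (Y * (w₀ • (1 : Matrix (ZMod N × ZMod N) (ZMod N × ZMod N) ℂ) +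
      (w₀ * w₂ * q⁻¹ ^ 3) • U)) = w₁⁻¹ • (1 - (q ^ 2 * w₂⁻¹) • Y) := by
    have hw1 : w₁⁻¹ = -(w₀ * w₂ * q⁻¹) := by
      have : w₀ * w₂ * w₁ = -q := by rw [← htetra]; ring
      apply inv_eq_of_mul_eq_one_right
      field_simp
      linear_combination -this
    rw [mul_add, mul_smul_comm, mul_smul_comm, hUY, hw1, mul_one]
    match_scalars <;> field_simp
  calc Psi N q w₀ w₂ U * q • (Y * K * Ups N q)
      = q • (Psi N q w₀ w₂ U * Y * K * Ups N q) := by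
        rw [mul_smul_comm]; simp only [mul_assoc]
    _ = (q • (Y * (w₀ • (1 : Matrix (ZMod N × ZMod N) (ZMod N × ZMod N) ℂ) +
      (w₀ * w₂ * q⁻¹ ^ 3) • U))) * (Psi N q w₀ w₂ (q⁻¹ ^ 2 • U) * K) * Ups N q := by
        rw [← hYsemi, hrec]
        simp only [smul_mul_assoc, mul_assoc]
    _ = _ := by
        rw [hscal, ← hsemi]
        simp only [smul_mul_assoc, mul_smul_comm, mul_assoc]
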